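/- A C*-algebra A is stable (i.e. A ≅ A ⊗ 𝒦) if and only if there exists a nondegenerate homomorphism ι: 𝒦 → M(A). -/

import Mathlib

/-!
Write `u i j` for the matrix units of `K = 𝒦`.

*Stable algebras carry a nondegenerate homomorphism.*  If `T` is a tensor product `B ⊗ K`, then for
every `k` the net `x ⊗ k`, with `x` running along an approximate unit of `B`, is bounded and
converges strictly to a multiplier `1 ⊗ k` of `T` (`CStarTensor.exists_oneTensor`, based on the
completeness statement `exists_strict_limit`).  The resulting homomorphism `k ↦ 1 ⊗ k` is
nondegenerate because `K` has an approximate unit (`CStarTensor.nondegenerate_oneTensor`).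

*Conversely*, a nondegenerate `ι : K → M(A)` yields matrix units `e i j = ι (u i j)` in `M(A)`.  Since
`ℕ × ℕ` is in bijection with `ℕ` via `Nat.pair`, the strictly convergent sums
`V k = ∑ i, e (pair i k) i` are isometries in `M(A)` with `star (V k) * V l = δ k l`
(`MultUnits.star_V_mul_V`).  Put `w i j a = V i * a * star (V j)`.  These elements of `A` satisfy the
relations of `a ⊗ u i j`, and they span a dense subspace of `A` (`MultUnits.dense_wsys`), so `A`
itself is a candidate for `A ⊗ K`.

It remains to extend `u i j ↦ w i j a` to all of `K` and to show that `a ⊗ k` has norm `‖a‖ * ‖k‖`.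
For a finite matrix `f`, the norm of `a ⊗ f` lies between the largest value of `‖f i j‖ * ‖a‖` and
their sum, so it agrees with `‖a‖ * ‖f‖` up to a factor that depends only on the size of the matrix.
Replacing `a` and `f` by `a⋆a` and `f⋆f` squares both quantities without changing the size;
iterating and taking `2 ^ n`-th roots removes the factor (`WSys.norm_F_mul_le`).

The witness of stability has to live in a possibly larger universe than `A`; the functions from a
one-point type to `A` serve as a copy of `A` there (`punitEquiv`).
-/

open scoped MultiplierAlgebra

noncomputable section

/-! ## Framework

`𝓜(ℂ, A)` is the multiplier algebra `M(A)` of a (non-unital) C⋆-algebra `A`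
(Mathlib's `DoubleCentralizer`), and `(a : 𝓜(ℂ, A))` is the canonical image of `a : A`
in it. -/

/-- A system of matrix units `{u i j}` (indexed by `ℕ`) in a non-unital C⋆-algebra `K`,
whose linear span is dense.  A C⋆-algebra carrying such a system is precisely (i.e., is
⋆-isomorphic to) the C⋆-algebra `𝒦` of compact operators on a separable
infinite-dimensional Hilbert space. -/
structure MatrixUnits (K : Type*) [NonUnitalCStarAlgebra K] where
  u : ℕ → ℕ → K
  u_ne_zero : ∀ i j, u i j ≠ 0
  u_mul : ∀ i j k l, u i j * u k l = if j = k then u i l else 0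
  star_u : ∀ i j, star (u i j) = u j i
  dense_span : Dense (Submodule.span ℂ (Set.range fun p : ℕ × ℕ => u p.1 p.2) : Set K)

/-- `K` is (a copy of) the C⋆-algebra `𝒦` of compact operators on a separable
infinite-dimensional Hilbert space. -/
def IsCompactOperatorsAlgebra (K : Type*) [NonUnitalCStarAlgebra K] : Prop :=
  Nonempty (MatrixUnits K)

/-- A homomorphism `φ : A → M(B)` is *nondegenerate* if `φ(A)·B` is dense in `B`. -/
def Nondegenerate {A B : Type*} [NonUnitalCStarAlgebra A] [NonUnitalCStarAlgebra B]
    (φ : A →⋆ₙₐ[ℂ] 𝓜(ℂ, B)) : Prop :=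
  ∀ b : B, (b : 𝓜(ℂ, B)) ∈
    closure (Submodule.span ℂ {x : 𝓜(ℂ, B) | ∃ (a : A) (c : B), x = φ a * c} : Set 𝓜(ℂ, B))

/-- The `A`-relative commutant `C(A, ι) = {a ∈ M(A) : ι(k)·a = a·ι(k) ∈ A for all k ∈ K}`
of a `K`-algebra `(A, ι)`. -/
def relComm {K A : Type*} [NonUnitalCStarAlgebra K] [NonUnitalCStarAlgebra A]
    (ι : K →⋆ₙₐ[ℂ] 𝓜(ℂ, A)) : Set 𝓜(ℂ, A) :=
  {a | ∀ k : K, ι k * a = a * ι k ∧ a * ι k ∈ Set.range ((↑) : A → 𝓜(ℂ, A))}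

/-- A witness that `T` is (a copy of) the spatial tensor product `B ⊗ K`: a bilinear,
multiplicative, star-preserving map on elementary tensors whose range has dense linear span
and which satisfies `‖b ⊗ k‖ = ‖b‖‖k‖`.  (Since the compact operators `𝒦` are nuclear and
simple, for `K = 𝒦` such data identifies `T` with the minimal tensor product `B ⊗ 𝒦`.) -/
structure CStarTensor (B K T : Type*) [NonUnitalCStarAlgebra B] [NonUnitalCStarAlgebra K]
    [NonUnitalCStarAlgebra T] where
  tmul : B → K → T
  add_tmul : ∀ b b' k, tmul (b + b') k = tmul b k + tmul b' k
  tmul_add : ∀ b k k', tmul b (k + k') = tmul b k + tmul b k'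
  smul_tmul : ∀ (c : ℂ) b k, tmul (c • b) k = c • tmul b k
  tmul_smul : ∀ (c : ℂ) b k, tmul b (c • k) = c • tmul b k
  tmul_mul_tmul : ∀ b b' k k', tmul b k * tmul b' k' = tmul (b * b') (k * k')
  star_tmul : ∀ b k, star (tmul b k) = tmul (star b) (star k)
  norm_tmul : ∀ b k, ‖tmul b k‖ = ‖b‖ * ‖k‖
  dense_span : Dense (Submodule.span ℂ {x : T | ∃ b k, x = tmul b k} : Set T)

/-- `ι` is the canonical nondegenerate homomorphism `1 ⊗ id : K → M(B ⊗ K)`, characterized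
by `(1 ⊗ k)·(b ⊗ k') = b ⊗ (k·k')` and `(b ⊗ k')·(1 ⊗ k) = b ⊗ (k'·k)`. -/
def IsOneTensorId {B K T : Type*} [NonUnitalCStarAlgebra B] [NonUnitalCStarAlgebra K]
    [NonUnitalCStarAlgebra T] (τ : CStarTensor B K T) (ι : K →⋆ₙₐ[ℂ] 𝓜(ℂ, T)) : Prop :=
  ∀ (k : K) (b : B) (k' : K),
    ι k * (τ.tmul b k' : 𝓜(ℂ, T)) = (τ.tmul b (k * k') : 𝓜(ℂ, T)) ∧
      (τ.tmul b k' : 𝓜(ℂ, T)) * ι k = (τ.tmul b (k' * k) : 𝓜(ℂ, T))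

universe u v

/-- A witness that the C⋆-algebra `A` is stable (relative to `K = 𝒦`): a C⋆-algebra `T`
which is a spatial tensor product `A ⊗ K`, together with a ⋆-isomorphism `A ≃ T`. -/
structure StabilityWitness (A : Type u) (K : Type v) [NonUnitalCStarAlgebra A]
    [NonUnitalCStarAlgebra K] where
  T : Type (max u v)
  [instT : NonUnitalCStarAlgebra T]
  tensor : CStarTensor A K T
  iso : A ≃⋆ₐ[ℂ] T

/-- A C⋆-algebra `A` is *stable* if `A ≅ A ⊗ 𝒦`. -/
def IsStable (A : Type u) (K : Type v) [NonUnitalCStarAlgebra A]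
    [NonUnitalCStarAlgebra K] : Prop :=
  Nonempty (StabilityWitness A K)


open Filter Topology

/-! ### Dense spans, strong limits, and the tensor power trick -/

section Banach

variable {E F : Type*} [NormedAddCommGroup E] [NormedSpace ℂ E] [NormedAddCommGroup F]
  [NormedSpace ℂ F]

/-- Induction along a set with dense linear span: a closed predicate stable under addition and
scalar multiplication holds everywhere as soon as it holds on the set. -/
lemma dense_span_induction {s : Set E} (hs : Dense (Submodule.span ℂ s : Set E))
    {P : E → Prop} (hP : IsClosed {x | P x}) (mem : ∀ x ∈ s, P x) (zero : P 0)
    (add : ∀ x y, P x → P y → P (x + y)) (smul : ∀ (c : ℂ) x, P x → P (c • x)) (x : E) : P x := by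
  refine hs.induction (P := P) (fun y hy => ?_) hP x
  induction hy using Submodule.span_induction with
  | mem y hy => exact mem y hy
  | zero => exact zero
  | add y z _ _ hy hz => exact add y z hy hz
  | smul c y _ hy => exact smul c y hy

lemma map_mem_closure_of_dense_span {Φ : Type*} [FunLike Φ E F] [LinearMapClass Φ ℂ E F] (φ : Φ)
    (hφ : Continuous φ) {s : Set E} (hs : Dense (Submodule.span ℂ s : Set E)) {N : Submodule ℂ F}
    (h : ∀ x ∈ s, φ x ∈ closure (N : Set F)) (x : E) : φ x ∈ closure (N : Set F) := by
  rw [← Submodule.topologicalClosure_coe] at h ⊢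
  refine dense_span_induction (P := fun x => φ x ∈ N.topologicalClosure) hs
    (N.isClosed_topologicalClosure.preimage hφ) h ?_ ?_ ?_ x
  · rw [map_zero]
    exact zero_mem _
  · intro x y hx hy
    rw [map_add]
    exact add_mem hx hy
  · intro c x hx
    rw [map_smul]
    exact Submodule.smul_mem _ c hx

/-- A bounded net of operators that converges pointwise on a set with dense span converges
pointwise everywhere, to a bounded operator. -/
lemma exists_strong_limit [CompleteSpace F] {ι : Type*} {l : Filter ι} [l.NeBot]
    {f : ι → E →L[ℂ] F} {C : ℝ} (hC : ∀ᶠ i in l, ‖f i‖ ≤ C) {s : Set E}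
    (hs : Dense (Submodule.span ℂ s : Set E))
    (hf : ∀ x ∈ s, ∃ y, Tendsto (fun i => f i x) l (𝓝 y)) :
    ∃ g : E →L[ℂ] F, ∀ x, Tendsto (fun i => f i x) l (𝓝 (g x)) := by
  have hC0 : 0 ≤ C := by
    obtain ⟨i, hi⟩ := hC.exists
    exact (norm_nonneg _).trans hi
  have key : ∀ x, ∃ y, Tendsto (fun i => f i x) l (𝓝 y) := by
    refine dense_span_induction hs ?_ hf ⟨0, by simp⟩ ?_ ?_
    · refine isClosed_of_closure_subset fun x hx => ?_
      refine cauchy_map_iff_exists_tendsto.1 (Metric.cauchy_iff.2 ⟨inferInstance, fun ε hε => ?_⟩)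
      obtain ⟨z, ⟨y, hy⟩, hxz⟩ := Metric.mem_closure_iff.1 hx (ε / 4 / (C + 1)) (by positivity)
      refine ⟨Metric.ball y (ε / 2), ?_, fun a ha b hb => ?_⟩
      · rw [mem_map]
        filter_upwards [hC, hy (Metric.ball_mem_nhds y (ε := ε / 4) (by positivity))] with i hi hiy
        have h1 : dist (f i x) (f i z) ≤ ε / 4 := by
          rw [dist_eq_norm, ← map_sub]
          calc ‖f i (x - z)‖ ≤ C * ‖x - z‖ := (f i).le_of_opNorm_le hi _
            _ ≤ (C + 1) * (ε / 4 / (C + 1)) := by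
              rw [dist_eq_norm] at hxz
              gcongr
              linarith
            _ = ε / 4 := by field_simp
        have h2 : dist (f i z) y < ε / 4 := hiy
        have := dist_triangle (f i x) (f i z) y
        change dist (f i x) y < ε / 2
        linarith
      · have := dist_triangle_right a b y
        rw [Metric.mem_ball] at ha hb
        linarith
    · rintro x y ⟨a, ha⟩ ⟨b, hb⟩
      exact ⟨a + b, by simpa using ha.add hb⟩
    · rintro c x ⟨a, ha⟩
      exact ⟨c • a, by simpa using ha.const_smul c⟩
  choose g hg using key
  refine ⟨LinearMap.mkContinuous
    { toFun := g
      map_add' := fun x y => tendsto_nhds_unique (hg (x + y)) (by simpa using (hg x).add (hg y))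
      map_smul' := fun c x =>
        tendsto_nhds_unique (hg (c • x)) (by simpa using (hg x).const_smul c) } C fun x => ?_, hg⟩
  refine le_of_tendsto (hg x).norm ?_
  filter_upwards [hC] with i hi using (f i).le_of_opNorm_le hi x

/-- The constant in an inequality `p ^ N ≤ C * q ^ N` disappears on taking `N`-th roots,
`N = 2 ^ n → ∞`. -/
lemma le_of_forall_pow_two_pow_le {p q C : ℝ} (hq : 0 ≤ q)
    (h : ∀ n : ℕ, p ^ 2 ^ n ≤ C * q ^ 2 ^ n) : p ≤ q := by
  by_contra! hlt
  rcases hq.eq_or_lt with rfl | hq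
  · have := h 0
    simp at this
    linarith
  have h1 : 1 < p / q := (one_lt_div hq).2 hlt
  obtain ⟨n, hn⟩ := ((tendsto_pow_atTop_atTop_of_one_lt h1).eventually_gt_atTop C).exists_forall_of_atTop
  have h2 := hn (2 ^ n) Nat.lt_two_pow_self.le
  rw [div_pow, lt_div_iff₀ (by positivity)] at h2
  exact (h n).not_gt h2

end Banach

/-! ### Matrix units with coefficients and the cross norm -/

section WSys

/-- A system of matrix units in `T` with coefficients in `A`: the maps `w i j : A → T` play the
role of `a ↦ a ⊗ u i j`, where `u i j` are the matrix units of `𝒦`. -/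
structure WSys (A T : Type*) [NonUnitalCStarAlgebra A] [NonUnitalCStarAlgebra T] where
  w : ℕ → ℕ → A →ₗ[ℂ] T
  w_mul : ∀ i j k l a b, w i j a * w k l b = if j = k then w i l (a * b) else 0
  star_w : ∀ i j a, star (w i j a) = w j i (star a)
  w_inj : ∀ i a, w i i a = 0 → a = 0

namespace WSys

variable {A' T' A T : Type*} [NonUnitalCStarAlgebra A'] [NonUnitalCStarAlgebra T']
  [NonUnitalCStarAlgebra A] [NonUnitalCStarAlgebra T]

/-- `a ↦ w j j a` is an injective ⋆-homomorphism, hence isometric; the C⋆-identity transfers this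
to the off-diagonal maps. -/
lemma norm_w (W : WSys A T) (i j : ℕ) (a : A) : ‖W.w i j a‖ = ‖a‖ := by
  let φ : A →⋆ₙₐ[ℂ] T :=
    { toFun := W.w j j
      map_smul' := by simp
      map_zero' := by simp
      map_add' := by simp
      map_mul' := by simp [W.w_mul]
      map_star' := by simp [W.star_w] }
  have hφ : ‖W.w j j (star a * a)‖ = ‖star a * a‖ :=
    NonUnitalStarAlgHom.norm_map φ
      ((injective_iff_map_eq_zero φ).2 fun x hx => W.w_inj j x hx) (star a * a)
  have h : ‖W.w i j a‖ * ‖W.w i j a‖ = ‖a‖ * ‖a‖ := by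
    rw [← CStarRing.norm_star_mul_self, ← CStarRing.norm_star_mul_self, W.star_w, W.w_mul,
      if_pos rfl, hφ]
  exact (mul_self_inj (norm_nonneg _) (norm_nonneg _)).1 h

/-- The element `a ⊗ (f i j)` of `A ⊗ M_s(ℂ)`, i.e. `∑ i j, f i j • w i j a` over `i j ∈ s`. -/
def F (W : WSys A T) (s : Finset ℕ) (a : A) (f : ℕ → ℕ → ℂ) : T :=
  ∑ i ∈ s, ∑ j ∈ s, f i j • W.w i j a

/-- `(a ⊗ f)⋆ (a ⊗ f) = a⋆a ⊗ f⋆f`. -/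
lemma star_F_mul_F (W : WSys A T) (s : Finset ℕ) (a : A) (f : ℕ → ℕ → ℂ) :
    star (W.F s a f) * W.F s a f =
      W.F s (star a * a) (fun i j => ∑ k ∈ s, star (f k i) * f k j) := by
  have h1 : star (W.F s a f) = ∑ i ∈ s, ∑ k ∈ s, star (f k i) • W.w i k (star a) := by
    simp only [F, star_sum, star_smul, W.star_w]
    exact Finset.sum_comm
  rw [h1, F, F, Finset.sum_mul]
  refine Finset.sum_congr rfl fun i _ => ?_
  rw [Finset.sum_mul]
  simp only [Finset.sum_smul]
  rw [Finset.sum_comm (s := s) (t := s) (f := fun j k => (star (f k i) * f k j) • W.w i j (star a * a))]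
  refine Finset.sum_congr rfl fun k hk => ?_
  rw [Finset.mul_sum, Finset.sum_eq_single_of_mem k hk]
  · rw [Finset.mul_sum]
    refine Finset.sum_congr rfl fun j _ => ?_
    rw [smul_mul_smul_comm, W.w_mul, if_pos rfl]
  · intro k' _ hne
    rw [Finset.mul_sum]
    refine Finset.sum_eq_zero fun j _ => ?_
    rw [smul_mul_smul_comm, W.w_mul, if_neg hne.symm, smul_zero]

/-- Each entry of a matrix is bounded by the norm of the matrix.  The entry is cut out by
multiplying from both sides with `w i i (star a)` and `w j j (star a)`, which play the role of the
diagonal matrix units in the absence of a unit of `A`. -/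
lemma norm_entry_le (W : WSys A T) {s : Finset ℕ} {i j : ℕ} (hi : i ∈ s) (hj : j ∈ s) (a : A)
    (f : ℕ → ℕ → ℂ) : ‖f i j‖ * ‖a‖ ≤ ‖W.F s a f‖ := by
  rcases eq_or_ne a 0 with rfl | ha
  · simp
  have ha : 0 < ‖a‖ := norm_pos_iff.2 ha
  have h1 : W.w i i (star a) * W.F s a f * W.w j j (star a) =
      f i j • W.w i j (star a * a * star a) := by
    rw [F, Finset.mul_sum, Finset.sum_mul, Finset.sum_eq_single_of_mem i hi,
      Finset.mul_sum, Finset.sum_mul, Finset.sum_eq_single_of_mem j hj]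
    · simp [mul_smul_comm, smul_mul_assoc, W.w_mul]
    · intro j' _ hne
      simp [mul_smul_comm, smul_mul_assoc, W.w_mul, hne]
    · intro i' _ hne
      rw [Finset.mul_sum, Finset.sum_mul]
      refine Finset.sum_eq_zero fun j' _ => ?_
      simp [mul_smul_comm, W.w_mul, hne.symm]
  -- only `≤` is needed; it follows from `‖(a⋆a)(a⋆a)‖ = ‖a‖ ^ 4` by factoring off the last `a`
  have h2 : ‖a‖ ^ 3 ≤ ‖star a * a * star a‖ := by
    have h : ‖star a * a * star a * a‖ = ‖a‖ ^ 4 := by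
      rw [mul_assoc (star a * a)]
      have := CStarRing.norm_star_mul_self (x := star a * a)
      rw [star_mul, star_star, CStarRing.norm_star_mul_self] at this
      rw [this]; ring
    have := norm_mul_le (star a * a * star a) a
    rw [h] at this
    nlinarith
  have h3 : ‖f i j‖ * ‖star a * a * star a‖ ≤ ‖a‖ ^ 2 * ‖W.F s a f‖ := by
    have : ‖W.w i i (star a) * W.F s a f * W.w j j (star a)‖ ≤
        ‖W.w i i (star a)‖ * ‖W.F s a f‖ * ‖W.w j j (star a)‖ :=
      (norm_mul_le _ _).trans (by gcongr; exact norm_mul_le _ _)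
    rw [h1, norm_smul, W.norm_w, W.norm_w, W.norm_w, norm_star] at this
    linarith
  have h4 : ‖f i j‖ * ‖a‖ ^ 3 ≤ ‖a‖ ^ 2 * ‖W.F s a f‖ :=
    (by gcongr : ‖f i j‖ * ‖a‖ ^ 3 ≤ _).trans h3
  have : ‖a‖ ^ 2 * (‖f i j‖ * ‖a‖) ≤ ‖a‖ ^ 2 * ‖W.F s a f‖ := by linarith
  exact le_of_mul_le_mul_left this (by positivity)

/-- The norms of `a ⊗ f` and `a' ⊗ f` in two systems are comparable up to the square of the
number of indices: estimate the first from above and the second from below by the entries. -/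
lemma norm_F_mul_le_card (W : WSys A T) (W' : WSys A' T') (s : Finset ℕ) (a : A) (a' : A')
    (f : ℕ → ℕ → ℂ) :
    ‖a'‖ * ‖W.F s a f‖ ≤ (s.card * s.card : ℝ) * (‖a‖ * ‖W'.F s a' f‖) := by
  have h1 : ‖W.F s a f‖ ≤ ∑ i ∈ s, ∑ j ∈ s, ‖f i j‖ * ‖a‖ := by
    refine (norm_sum_le _ _).trans (Finset.sum_le_sum fun i _ => (norm_sum_le _ _).trans ?_)
    exact Finset.sum_le_sum fun j _ => by rw [norm_smul, W.norm_w]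
  calc ‖a'‖ * ‖W.F s a f‖ ≤ ‖a'‖ * ∑ i ∈ s, ∑ j ∈ s, ‖f i j‖ * ‖a‖ := by gcongr
    _ = ∑ i ∈ s, ∑ j ∈ s, ‖a‖ * (‖f i j‖ * ‖a'‖) := by
      simp only [Finset.mul_sum]
      exact Finset.sum_congr rfl fun i _ => Finset.sum_congr rfl fun j _ => by ring
    _ ≤ ∑ i ∈ s, ∑ j ∈ s, ‖a‖ * ‖W'.F s a' f‖ :=
      Finset.sum_le_sum fun i hi => Finset.sum_le_sum fun j hj => by
        gcongr
        exact W'.norm_entry_le hi hj a' f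
    _ = _ := by simp [mul_assoc]

/-- The comparison `norm_F_mul_le_card` holds without the constant: apply it to the iterates
`t, t⋆t, (t⋆t)⋆(t⋆t), …`, whose norms are the `2 ^ n`-th powers of the norm of `t`, and take roots. -/
lemma norm_F_mul_le (W : WSys A T) (W' : WSys A' T') (s : Finset ℕ) (a : A) (a' : A')
    (f : ℕ → ℕ → ℂ) : ‖a'‖ * ‖W.F s a f‖ ≤ ‖a‖ * ‖W'.F s a' f‖ := by
  refine le_of_forall_pow_two_pow_le (C := s.card * s.card) (by positivity) fun n => ?_
  induction n generalizing a a' f with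
  | zero => simpa using W.norm_F_mul_le_card W' s a a' f
  | succ n ih =>
    have h := ih (star a * a) (star a' * a') (fun i j => ∑ k ∈ s, star (f k i) * f k j)
    rw [← star_F_mul_F, ← star_F_mul_F] at h
    simp only [CStarRing.norm_star_mul_self] at h
    rw [mul_mul_mul_comm, mul_mul_mul_comm ‖a‖, ← sq (‖a'‖ * _), ← sq (‖a‖ * _), ← pow_mul, ← pow_mul] at h
    rwa [pow_succ' 2 n]

/-- The matrix units of `K` as a system with scalar coefficients. -/
def ofMatrixUnits {K : Type*} [NonUnitalCStarAlgebra K] (U : MatrixUnits K) : WSys ℂ K where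
  w i j := LinearMap.toSpanSingleton ℂ K (U.u i j)
  w_mul i j k l a b := by
    simp [smul_mul_smul_comm, U.u_mul]
  star_w i j a := by simp [U.star_u]
  w_inj i a h := by simpa [U.u_ne_zero] using h

/-- The cross-norm identity `‖a ⊗ f‖ = ‖a‖ * ‖f‖` for finite matrices `f`, by comparing `W` with
the scalar system `U` in both directions. -/
lemma norm_linearCombination {K : Type*} [NonUnitalCStarAlgebra K] (U : MatrixUnits K)
    (W : WSys A T) (a : A) (f : ℕ × ℕ →₀ ℂ) :
    ‖Finsupp.linearCombination ℂ (fun p : ℕ × ℕ => W.w p.1 p.2 a) f‖ =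
      ‖a‖ * ‖Finsupp.linearCombination ℂ (fun p : ℕ × ℕ => U.u p.1 p.2) f‖ := by
  -- a finite set of indices containing all rows and columns that meet the support of `f`
  let s : Finset ℕ := f.support.image Prod.fst ∪ f.support.image Prod.snd
  have hs : f.support ⊆ s ×ˢ s := fun p hp => by
    simp only [s, Finset.mem_product, Finset.mem_union, Finset.mem_image]
    exact ⟨Or.inl ⟨p, hp, rfl⟩, Or.inr ⟨p, hp, rfl⟩⟩
  have h1 : Finsupp.linearCombination ℂ (fun p : ℕ × ℕ => W.w p.1 p.2 a) f =
      W.F s a (fun i j => f (i, j)) := by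
    rw [Finsupp.linearCombination_apply, Finsupp.sum_of_support_subset f hs _ (by simp), F,
      Finset.sum_product]
  have h2 : Finsupp.linearCombination ℂ (fun p : ℕ × ℕ => U.u p.1 p.2) f =
      (ofMatrixUnits U).F s 1 (fun i j => f (i, j)) := by
    rw [Finsupp.linearCombination_apply, Finsupp.sum_of_support_subset f hs _ (by simp), F,
      Finset.sum_product]
    simp [ofMatrixUnits]
  rw [h1, h2]
  apply le_antisymm
  · simpa using W.norm_F_mul_le (ofMatrixUnits U) s a 1 (fun i j => f (i, j))
  · simpa using (ofMatrixUnits U).norm_F_mul_le W s 1 a (fun i j => f (i, j))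

end WSys

lemma MatrixUnits.denseRange {K : Type*} [NonUnitalCStarAlgebra K] (U : MatrixUnits K) :
    DenseRange (Finsupp.linearCombination ℂ (fun p : ℕ × ℕ => U.u p.1 p.2)) := by
  have := U.dense_span
  rwa [← Finsupp.range_linearCombination, LinearMap.coe_range] at this

namespace WSys

variable {A T K : Type*} [NonUnitalCStarAlgebra A] [NonUnitalCStarAlgebra T]
  [NonUnitalCStarAlgebra K]

/-- The map `k ↦ a ⊗ k` on `K`: the continuous extension of `u i j ↦ w i j a` from the span of
the matrix units. -/
def tm (W : WSys A T) (U : MatrixUnits K) (a : A) : K →L[ℂ] T :=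
  (Finsupp.linearCombination ℂ (fun p : ℕ × ℕ => W.w p.1 p.2 a)).extendOfNorm
    (Finsupp.linearCombination ℂ (fun p : ℕ × ℕ => U.u p.1 p.2))

lemma tm_lc (W : WSys A T) (U : MatrixUnits K) (a : A) (f : ℕ × ℕ →₀ ℂ) :
    W.tm U a (Finsupp.linearCombination ℂ (fun p : ℕ × ℕ => U.u p.1 p.2) f) =
      Finsupp.linearCombination ℂ (fun p : ℕ × ℕ => W.w p.1 p.2 a) f :=
  LinearMap.extendOfNorm_eq U.denseRange ⟨‖a‖, fun x => (norm_linearCombination U W a x).le⟩ f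

lemma tm_u (W : WSys A T) (U : MatrixUnits K) (a : A) (i j : ℕ) :
    W.tm U a (U.u i j) = W.w i j a := by
  simpa using W.tm_lc U a (Finsupp.single (i, j) 1)

lemma norm_tm (W : WSys A T) (U : MatrixUnits K) (a : A) (k : K) :
    ‖W.tm U a k‖ = ‖a‖ * ‖k‖ := by
  refine U.denseRange.induction_on (p := fun k => ‖W.tm U a k‖ = ‖a‖ * ‖k‖) k
    (isClosed_eq (by fun_prop) (by fun_prop)) fun f => ?_
  rw [tm_lc, norm_linearCombination U W]

/-- `dense_span_induction` for the matrix units of `K`. -/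
lemma ind (U : MatrixUnits K) {P : K → Prop} (hP : IsClosed {x | P x})
    (mem : ∀ i j, P (U.u i j)) (zero : P 0)
    (add : ∀ x y, P x → P y → P (x + y)) (smul : ∀ (c : ℂ) x, P x → P (c • x)) (x : K) : P x :=
  dense_span_induction U.dense_span hP (by rintro _ ⟨p, rfl⟩; exact mem _ _) zero add smul x

/-- A system of matrix units with coefficients in `A` whose span is dense in `T` exhibits `T` as a
spatial tensor product `A ⊗ K`. -/
def tensor (W : WSys A T) (U : MatrixUnits K)
    (hd : Dense (Submodule.span ℂ {x : T | ∃ i j a, x = W.w i j a} : Set T)) :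
    CStarTensor A K T where
  tmul a k := W.tm U a k
  add_tmul b b' k := by
    have : W.tm U (b + b') = W.tm U b + W.tm U b' :=
      ContinuousLinearMap.ext_on U.dense_span (by rintro _ ⟨p, rfl⟩; simp [tm_u])
    simp [this]
  tmul_add b k k' := map_add _ _ _
  smul_tmul c b k := by
    have : W.tm U (c • b) = c • W.tm U b :=
      ContinuousLinearMap.ext_on U.dense_span (by rintro _ ⟨p, rfl⟩; simp [tm_u])
    simp [this]
  tmul_smul c b k := map_smul _ _ _
  tmul_mul_tmul b b' k k' := by
    refine ind U (P := fun k => W.tm U b k * W.tm U b' k' = W.tm U (b * b') (k * k'))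
      (isClosed_eq (by fun_prop) (by fun_prop)) (fun i j => ?_) (by simp)
      (fun x y hx hy => by simp [add_mul, hx, hy])
      (fun c x hx => by simp [smul_mul_assoc, hx]) k
    refine ind U (P := fun k' => W.tm U b (U.u i j) * W.tm U b' k' =
        W.tm U (b * b') (U.u i j * k'))
      (isClosed_eq (by fun_prop) (by fun_prop)) (fun k l => ?_) (by simp)
      (fun x y hx hy => by simp [mul_add, hx, hy])
      (fun c x hx => by simp [mul_smul_comm, hx]) k'
    rw [tm_u, tm_u, W.w_mul, U.u_mul]
    split_ifs <;> simp [tm_u]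
  star_tmul b k := by
    refine ind U (P := fun k => star (W.tm U b k) = W.tm U (star b) (star k))
      (isClosed_eq (by fun_prop) (by fun_prop)) (fun i j => ?_) (by simp)
      (fun x y hx hy => by simp [hx, hy])
      (fun c x hx => by simp [star_smul, hx]) k
    rw [tm_u, W.star_w, U.star_u, tm_u]
  norm_tmul b k := W.norm_tm U b k
  dense_span := hd.mono (Submodule.span_mono (by
    rintro _ ⟨i, j, a, rfl⟩
    exact ⟨a, U.u i j, (W.tm_u U a i j).symm⟩))

end WSys

end WSys

/-! ### Multipliers -/

section Multiplier

open DoubleCentralizer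

variable {A : Type*} [NonUnitalCStarAlgebra A]

lemma eq_of_mul_left_eq {x y : A} (h : ∀ z, z * x = z * y) : x = y := by
  have := h (star (x - y))
  rw [← sub_eq_zero, ← mul_sub, CStarRing.star_mul_self_eq_zero_iff, sub_eq_zero] at this
  exact this

lemma fst_mul (m : 𝓜(ℂ, A)) (x y : A) : m.fst (x * y) = m.fst x * y :=
  eq_of_mul_left_eq fun z => by
    rw [← m.central, ← mul_assoc, m.central, mul_assoc]

lemma mul_coe (m : 𝓜(ℂ, A)) (x : A) : m * (x : 𝓜(ℂ, A)) = ((m.fst x : A) : 𝓜(ℂ, A)) := by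
  refine DoubleCentralizer.ext _ _ _ _ (Prod.ext ?_ ?_)
  · ext y
    exact fst_mul m x y
  · ext y
    exact m.central y x

lemma coe_inj {x y : A} (h : (x : 𝓜(ℂ, A)) = (y : 𝓜(ℂ, A))) : x = y :=
  eq_of_mul_left_eq fun z => congrArg (fun m : 𝓜(ℂ, A) => m.snd z) h

lemma norm_coe (x : A) : ‖(x : 𝓜(ℂ, A))‖ = ‖x‖ :=
  NonUnitalStarAlgHom.norm_map (coeHom (𝕜 := ℂ) (A := A)) (fun _ _ h => coe_inj h) x

lemma isometry_coe : Isometry (DoubleCentralizer.coe ℂ : A → 𝓜(ℂ, A)) :=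
  NonUnitalStarAlgHom.isometry (coeHom (𝕜 := ℂ) (A := A)) (fun _ _ h => coe_inj h)

lemma star_coe (x : A) : star (x : 𝓜(ℂ, A)) = ((star x : A) : 𝓜(ℂ, A)) :=
  (map_star (coeHom (𝕜 := ℂ) (A := A)) x).symm

lemma coe_mul (x y : A) : ((x * y : A) : 𝓜(ℂ, A)) = (x : 𝓜(ℂ, A)) * (y : 𝓜(ℂ, A)) :=
  map_mul (coeHom (𝕜 := ℂ) (A := A)) x y

lemma coe_mul_mult (m : 𝓜(ℂ, A)) (x : A) :
    (x : 𝓜(ℂ, A)) * m = ((m.snd x : A) : 𝓜(ℂ, A)) := by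
  apply star_injective
  rw [star_mul, star_coe, mul_coe, star_coe, star_fst, star_star]

/-- A multiplier is determined by its left action, since `‖m‖ = ‖m.fst‖`. -/
lemma ext_fst {m m' : 𝓜(ℂ, A)} (h : m.fst = m'.fst) : m = m' := by
  rw [← sub_eq_zero, ← norm_eq_zero, ← norm_fst, sub_fst, h, sub_self, norm_zero]

/-- A bounded net of multipliers, both of whose actions converge pointwise on a set with dense
span, converges strictly to a multiplier. -/
lemma exists_strict_limit {ι : Type*} {l : Filter ι} [l.NeBot]
    {m : ι → 𝓜(ℂ, A)} {C : ℝ} (hC : ∀ᶠ i in l, ‖m i‖ ≤ C) {s : Set A}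
    (hs : Dense (Submodule.span ℂ s : Set A))
    (hL : ∀ x ∈ s, ∃ y, Tendsto (fun i => (m i).fst x) l (𝓝 y))
    (hR : ∀ x ∈ s, ∃ y, Tendsto (fun i => (m i).snd x) l (𝓝 y)) :
    ∃ M : 𝓜(ℂ, A), (∀ x, Tendsto (fun i => (m i).fst x) l (𝓝 (M.fst x))) ∧
      ∀ x, Tendsto (fun i => (m i).snd x) l (𝓝 (M.snd x)) := by
  obtain ⟨L, hL'⟩ := exists_strong_limit (f := fun i => (m i).fst) (by simpa using hC) hs hL
  obtain ⟨R, hR'⟩ := exists_strong_limit (f := fun i => (m i).snd) (by simpa using hC) hs hR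
  exact ⟨⟨(L, R), fun x y => tendsto_nhds_unique ((hR' x).mul_const y)
    (by simpa only [(m _).central] using (hL' y).const_mul x)⟩, hL', hR'⟩

lemma exists_approximateUnit (A : Type*) [NonUnitalCStarAlgebra A] :
    ∃ l : Filter A, l.IsApproximateUnit ∧ ∀ᶠ x in l, ‖x‖ ≤ 1 := by
  let _ := CStarAlgebra.spectralOrder A
  let _ := CStarAlgebra.spectralOrderedRing A
  have h := CStarAlgebra.increasingApproximateUnit A
  exact ⟨_, h.toIsApproximateUnit, h.eventually_norm⟩

end Multiplier

/-! ### The homomorphism `k ↦ 1 ⊗ k` -/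

section Forward

variable {B K T : Type*} [NonUnitalCStarAlgebra B] [NonUnitalCStarAlgebra K]
  [NonUnitalCStarAlgebra T]

namespace CStarTensor

/-- Transport of a tensor product structure along a ⋆-isomorphism. -/
def congr {T' : Type*} [NonUnitalCStarAlgebra T'] (τ : CStarTensor B K T) (e : T ≃⋆ₐ[ℂ] T') :
    CStarTensor B K T' where
  tmul b k := e (τ.tmul b k)
  add_tmul b b' k := by rw [τ.add_tmul, map_add]
  tmul_add b k k' := by rw [τ.tmul_add, map_add]
  smul_tmul c b k := by rw [τ.smul_tmul, map_smul]
  tmul_smul c b k := by rw [τ.tmul_smul, map_smul]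
  tmul_mul_tmul b b' k k' := by rw [← map_mul, τ.tmul_mul_tmul]
  star_tmul b k := by rw [← map_star, τ.star_tmul]
  norm_tmul b k := by rw [StarAlgEquiv.norm_map, τ.norm_tmul]
  dense_span := by
    intro y
    have hc : Continuous e := (StarAlgEquiv.isometry e).continuous
    obtain ⟨x, rfl⟩ := e.surjective y
    refine map_mem_closure_of_dense_span e hc τ.dense_span ?_ x
    rintro _ ⟨b, k, rfl⟩
    exact subset_closure (Submodule.subset_span ⟨b, k, rfl⟩)

variable (τ : CStarTensor B K T)

/-- The bounded linear map `k ↦ b ⊗ k`. -/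
def rightL (b : B) : K →L[ℂ] T :=
  LinearMap.mkContinuous
    { toFun := τ.tmul b
      map_add' := τ.tmul_add b
      map_smul' := fun c k => τ.tmul_smul c b k } ‖b‖ fun k => (τ.norm_tmul b k).le

/-- The bounded linear map `b ↦ b ⊗ k`. -/
def leftL (k : K) : B →L[ℂ] T :=
  LinearMap.mkContinuous
    { toFun := fun b => τ.tmul b k
      map_add' := fun b b' => τ.add_tmul b b' k
      map_smul' := fun c b => τ.smul_tmul c b k } ‖k‖
    fun b => by rw [mul_comm]; exact (τ.norm_tmul b k).le

/-- The multiplier `1 ⊗ k` is the strict limit of `x ⊗ k`, where `x` runs along an approximate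
unit of `B`. -/
lemma exists_oneTensor (k : K) : ∃ m : 𝓜(ℂ, T), ∀ b k',
    m.fst (τ.tmul b k') = τ.tmul b (k * k') ∧ m.snd (τ.tmul b k') = τ.tmul b (k' * k) := by
  obtain ⟨l, hl, hl1⟩ := exists_approximateUnit B
  have := hl.neBot
  have hL : ∀ b k', Tendsto (fun x => (τ.tmul x k : 𝓜(ℂ, T)).fst (τ.tmul b k')) l
      (𝓝 (τ.tmul b (k * k'))) := fun b k' => by
    have h := ((τ.leftL (k * k')).continuous.tendsto b).comp (hl.tendsto_mul_right b)
    refine h.congr fun x => (τ.tmul_mul_tmul x b k k').symm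
  have hR : ∀ b k', Tendsto (fun x => (τ.tmul x k : 𝓜(ℂ, T)).snd (τ.tmul b k')) l
      (𝓝 (τ.tmul b (k' * k))) := fun b k' => by
    have h := ((τ.leftL (k' * k)).continuous.tendsto b).comp (hl.tendsto_mul_left b)
    refine h.congr fun x => (τ.tmul_mul_tmul b x k' k).symm
  obtain ⟨M, hM1, hM2⟩ := exists_strict_limit (m := fun x => (τ.tmul x k : 𝓜(ℂ, T))) (l := l)
    (C := ‖k‖) (by
      filter_upwards [hl1] with x hx
      rw [norm_coe, τ.norm_tmul]
      exact mul_le_of_le_one_left (norm_nonneg _) hx) τ.dense_span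
    (by rintro _ ⟨b, k', rfl⟩; exact ⟨_, hL b k'⟩) (by rintro _ ⟨b, k', rfl⟩; exact ⟨_, hR b k'⟩)
  exact ⟨M, fun b k' => ⟨tendsto_nhds_unique (hM1 _) (hL b k'),
    tendsto_nhds_unique (hM2 _) (hR b k')⟩⟩

lemma ext_mult {m m' : 𝓜(ℂ, T)} (h : ∀ b k, m.fst (τ.tmul b k) = m'.fst (τ.tmul b k)) :
    m = m' :=
  ext_fst (ContinuousLinearMap.ext_on τ.dense_span (by rintro _ ⟨b, k, rfl⟩; exact h b k))

/-- The multiplier `1 ⊗ k` of `T`. -/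
def oneT (k : K) : 𝓜(ℂ, T) := (τ.exists_oneTensor k).choose

lemma oneT_fst (k : K) (b : B) (k' : K) : (τ.oneT k).fst (τ.tmul b k') = τ.tmul b (k * k') :=
  ((τ.exists_oneTensor k).choose_spec b k').1

lemma oneT_snd (k : K) (b : B) (k' : K) : (τ.oneT k).snd (τ.tmul b k') = τ.tmul b (k' * k) :=
  ((τ.exists_oneTensor k).choose_spec _ _).2

/-- The homomorphism `k ↦ 1 ⊗ k` from `K` to `M(T)`. -/
def oneTensor : K →⋆ₙₐ[ℂ] 𝓜(ℂ, T) where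
  toFun := τ.oneT
  map_smul' c k := τ.ext_mult fun b k' => by
    simp [oneT_fst, smul_mul_assoc, τ.tmul_smul]
  map_zero' := τ.ext_mult fun b k' => by
    rw [oneT_fst, zero_mul]
    exact map_zero (τ.rightL b)
  map_add' x y := τ.ext_mult fun b k' => by
    simp [oneT_fst, add_mul, τ.tmul_add]
  map_mul' x y := τ.ext_mult fun b k' => by
    simp [oneT_fst, mul_assoc]
  map_star' x := τ.ext_mult fun b k' => by
    rw [oneT_fst, DoubleCentralizer.star_fst, τ.star_tmul, oneT_snd, τ.star_tmul]
    simp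

lemma oneTensor_fst (k : K) (b : B) (k' : K) :
    (τ.oneTensor k).fst (τ.tmul b k') = τ.tmul b (k * k') :=
  τ.oneT_fst _ _ _

/-- If `x` runs along an approximate unit of `K`, then `(1 ⊗ x) (b ⊗ k) = b ⊗ x k → b ⊗ k`. -/
lemma nondegenerate_oneTensor : Nondegenerate τ.oneTensor := by
  intro t
  refine map_mem_closure_of_dense_span (DoubleCentralizer.coeHom (𝕜 := ℂ) (A := T))
    isometry_coe.continuous τ.dense_span ?_ t
  rintro _ ⟨b, k, rfl⟩
  obtain ⟨l, hl, -⟩ := exists_approximateUnit K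
  have := hl.neBot
  refine mem_closure_of_tendsto ((isometry_coe.continuous.tendsto _).comp
    (((τ.rightL b).continuous.tendsto k).comp (hl.tendsto_mul_right k)))
    (Eventually.of_forall fun x => Submodule.subset_span ⟨x, τ.tmul b k, ?_⟩)
  rw [mul_coe, oneTensor_fst]
  rfl

end CStarTensor

end Forward

/-! ### From matrix units in `M(A)` to `A ≅ A ⊗ 𝒦` -/

section Backward

open DoubleCentralizer

/-- A nondegenerate system of matrix units in the multiplier algebra `M(A)`; nondegeneracy means
that the elements `e i j * c` with `c : A` span a dense subspace of `A`. -/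
structure MultUnits (A : Type*) [NonUnitalCStarAlgebra A] where
  e : ℕ → ℕ → 𝓜(ℂ, A)
  e_mul : ∀ i j k l, e i j * e k l = if j = k then e i l else 0
  star_e : ∀ i j, star (e i j) = e j i
  dense_left : Dense (Submodule.span ℂ {x : A | ∃ i j c, x = (e i j).fst c} : Set A)

/-- The image of a system of matrix units under a nondegenerate homomorphism. -/
def MultUnits.ofHom {K A : Type*} [NonUnitalCStarAlgebra K] [NonUnitalCStarAlgebra A]
    (U : MatrixUnits K) (ι : K →⋆ₙₐ[ℂ] 𝓜(ℂ, A)) (hι : Nondegenerate ι) : MultUnits A where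
  e i j := ι (U.u i j)
  e_mul i j k l := by
    rw [← map_mul, U.u_mul]
    split_ifs <;> simp
  star_e i j := by rw [← map_star, U.star_u]
  dense_left := by
    set N := Submodule.span ℂ {x : A | ∃ i j c, x = (ι (U.u i j)).fst c} with hN
    have hιc : Continuous ι :=
      AddMonoidHomClass.continuous_of_bound ι 1 (by
        simpa only [one_mul] using NonUnitalStarAlgHom.norm_apply_le ι)
    -- by density of the matrix units, `ι k * c` is approximated by combinations of `ι (u i j) * c`
    have h1 : ∀ k c, (ι k).fst c ∈ closure (N : Set A) := fun k c => by
      let φ : K →ₗ[ℂ] A :=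
        { toFun := fun k => (ι k).fst c
          map_add' := by simp
          map_smul' := by simp }
      have hφ : Continuous φ := by
        refine AddMonoidHomClass.continuous_of_bound φ ‖c‖ fun k => ?_
        refine ((ι k).fst.le_opNorm c).trans ?_
        rw [norm_fst, mul_comm]
        gcongr
        exact NonUnitalStarAlgHom.norm_apply_le ι k
      refine map_mem_closure_of_dense_span φ hφ U.dense_span ?_ k
      rintro _ ⟨p, rfl⟩
      exact subset_closure (Submodule.subset_span ⟨_, _, c, rfl⟩)
    have h2 : (Submodule.span ℂ {x : 𝓜(ℂ, A) | ∃ (k : K) (c : A), x = ι k * c}) ≤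
        N.topologicalClosure.map (coeHom (𝕜 := ℂ) (A := A) : A →ₗ[ℂ] 𝓜(ℂ, A)) := by
      rw [Submodule.span_le]
      rintro _ ⟨k, c, rfl⟩
      exact ⟨(ι k).fst c, h1 k c, (mul_coe _ _).symm⟩
    intro b
    have h3 := closure_mono (SetLike.coe_subset_coe.2 h2) (hι b)
    have h4 : (b : 𝓜(ℂ, A)) ∈ closure
        ((DoubleCentralizer.coe ℂ : A → 𝓜(ℂ, A)) '' (closure (N : Set A))) := h3
    -- `A` carries the topology induced from `M(A)`, so closures may be computed in `M(A)`
    have h5 := (isometry_coe (A := A)).isUniformInducing.isInducing.closure_eq_preimage_closure_image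
      (closure (N : Set A))
    rw [closure_closure] at h5
    rw [h5]
    exact h4

namespace MultUnits

variable {A : Type*} [NonUnitalCStarAlgebra A] (E : MultUnits A)

/-- The map `c ↦ m * c * n` on `A`, for multipliers `m` and `n`. -/
def sandwich (m n : 𝓜(ℂ, A)) : A →L[ℂ] A := m.fst ∘L n.snd

lemma coe_sandwich (m n : 𝓜(ℂ, A)) (c : A) :
    ((sandwich m n c : A) : 𝓜(ℂ, A)) = m * c * n := by
  rw [mul_assoc, coe_mul_mult, mul_coe]
  rfl

lemma dense_right : Dense (Submodule.span ℂ {x : A | ∃ i j c, x = (E.e i j).snd c} : Set A) := by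
  intro x
  rw [← star_star x, ← Submodule.topologicalClosure_coe]
  refine dense_span_induction E.dense_left (P := fun y => star y ∈
    (Submodule.span ℂ {x : A | ∃ i j c, x = (E.e i j).snd c}).topologicalClosure)
    ((Submodule.isClosed_topologicalClosure _).preimage continuous_star) ?_ ?_ ?_ ?_ (star x)
  · rintro _ ⟨i, j, c, rfl⟩
    refine Submodule.le_topologicalClosure _ (Submodule.subset_span ⟨j, i, star c, ?_⟩)
    rw [← E.star_e i j, star_snd, star_star]
  · rw [star_zero]
    exact zero_mem _
  · intro y z hy hz
    rw [star_add]
    exact add_mem hy hz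
  · intro c y hy
    rw [star_smul]
    exact Submodule.smul_mem _ _ hy

lemma dense_sandwich :
    Dense (Submodule.span ℂ {x : A | ∃ i j k l c, x = sandwich (E.e i j) (E.e k l) c} : Set A) := by
  rw [← dense_closure]
  refine E.dense_left.mono ?_
  rw [← Submodule.topologicalClosure_coe]
  refine Submodule.span_le.2 ?_
  rintro _ ⟨i, j, c, rfl⟩
  refine map_mem_closure_of_dense_span (E.e i j).fst (E.e i j).fst.continuous E.dense_right ?_ c
  rintro _ ⟨k, l, c, rfl⟩
  exact subset_closure (Submodule.subset_span ⟨i, j, k, l, c, rfl⟩)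

lemma eq_zero_of_mul_e {m : 𝓜(ℂ, A)} (h : ∀ i j, m * E.e i j = 0) : m = 0 := by
  refine ext_fst (ContinuousLinearMap.ext_on E.dense_left ?_)
  rintro _ ⟨i, j, c, rfl⟩
  have := congrArg (fun m : 𝓜(ℂ, A) => m.fst c) (h i j)
  simpa using this

/-- A multiplier is determined by its two-sided compressions to matrix units. -/
lemma ext_e {m m' : 𝓜(ℂ, A)} (h : ∀ p i j q, E.e p i * m * E.e j q = E.e p i * m' * E.e j q) :
    m = m' := by
  rw [← sub_eq_zero]
  refine E.eq_zero_of_mul_e fun j q => ?_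
  rw [← star_eq_zero]
  refine E.eq_zero_of_mul_e fun i p => ?_
  rw [← star_eq_zero, star_mul, star_star, E.star_e, ← mul_assoc, mul_sub, sub_mul, h, sub_self]

/-- The partial sums `∑ i < n, e (σ i) i` of the isometry that sends the `i`-th basis vector to
the `σ i`-th one. -/
def trunc (σ : ℕ → ℕ) (n : ℕ) : 𝓜(ℂ, A) := ∑ i ∈ Finset.range n, E.e (σ i) i

lemma trunc_mul_e (σ : ℕ → ℕ) (n i j : ℕ) :
    E.trunc σ n * E.e i j = if i < n then E.e (σ i) j else 0 := by
  simp [trunc, Finset.sum_mul, E.e_mul]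

lemma e_mul_trunc (σ : ℕ → ℕ) (n i j : ℕ) :
    E.e i j * E.trunc σ n = ∑ m ∈ Finset.range n, if j = σ m then E.e i m else 0 := by
  simp [trunc, Finset.mul_sum, E.e_mul]

lemma exists_e_mul_trunc {σ : ℕ → ℕ} (hσ : Function.Injective σ) (i j : ℕ) :
    ∃ m, ∀ᶠ n in atTop, E.e i j * E.trunc σ n = m := by
  by_cases h : ∃ m, j = σ m
  · obtain ⟨m, rfl⟩ := h
    refine ⟨E.e i m, ?_⟩
    filter_upwards [eventually_gt_atTop m] with n hn
    rw [e_mul_trunc, Finset.sum_eq_single_of_mem m (Finset.mem_range.2 hn), if_pos rfl]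
    intro k _ hk
    exact if_neg fun h => hk (hσ h).symm
  · push Not at h
    refine ⟨0, Eventually.of_forall fun n => ?_⟩
    simp [e_mul_trunc, h]

/-- For injective `τ` the element `t = trunc τ n` satisfies `t⋆t = ∑ i < n, e i i =: p`.  Taking
`τ = id`, for which `t = p`, gives `‖p‖ ^ 2 = ‖p‖`, hence `‖p‖ ≤ 1`; then `‖trunc σ n‖ ^ 2 = ‖p‖`. -/
lemma norm_trunc_le {σ : ℕ → ℕ} (hσ : Function.Injective σ) (n : ℕ) : ‖E.trunc σ n‖ ≤ 1 := by
  have key : ∀ τ : ℕ → ℕ, Function.Injective τ →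
      star (E.trunc τ n) * E.trunc τ n = E.trunc id n := fun τ hτ => by
    have : star (E.trunc τ n) = ∑ i ∈ Finset.range n, E.e i (τ i) := by
      simp [trunc, E.star_e]
    rw [this, Finset.sum_mul]
    refine Finset.sum_congr rfl fun i hi => ?_
    rw [e_mul_trunc, Finset.sum_eq_single_of_mem i hi, if_pos rfl]
    · rfl
    · intro k _ hk
      exact if_neg fun h => hk (hτ h).symm
  have norm_sq : ∀ τ : ℕ → ℕ, Function.Injective τ →
      ‖E.trunc τ n‖ * ‖E.trunc τ n‖ = ‖E.trunc id n‖ := fun τ hτ => by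
    rw [← CStarRing.norm_star_mul_self, key τ hτ]
  have h1 := norm_sq σ hσ
  have h2 := norm_sq id Function.injective_id
  have h3 : ‖E.trunc id n‖ ≤ 1 := by
    by_contra! h
    nlinarith
  by_contra! h
  nlinarith

/-- The truncations converge strictly: they are bounded, and on elements `e i j * c * e k l`, which
span a dense subspace, both of their actions are eventually constant. -/
lemma exists_isometry {σ : ℕ → ℕ} (hσ : Function.Injective σ) :
    ∃ V : 𝓜(ℂ, A), ∀ i j, V * E.e i j = E.e (σ i) j := by
  obtain ⟨V, hV, -⟩ := exists_strict_limit (l := atTop) (m := E.trunc σ) (C := 1)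
    (Eventually.of_forall (E.norm_trunc_le hσ)) E.dense_sandwich
    (by
      rintro _ ⟨i, j, k, l, c, rfl⟩
      refine ⟨sandwich (E.e (σ i) j) (E.e k l) c, tendsto_const_nhds.congr' ?_⟩
      filter_upwards [eventually_gt_atTop i] with n hn
      apply coe_inj
      rw [← mul_coe, coe_sandwich, coe_sandwich, ← mul_assoc, ← mul_assoc, trunc_mul_e, if_pos hn])
    (by
      rintro _ ⟨i, j, k, l, c, rfl⟩
      obtain ⟨m, hm⟩ := E.exists_e_mul_trunc hσ k l
      refine ⟨sandwich (E.e i j) m c, tendsto_const_nhds.congr' ?_⟩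
      filter_upwards [hm] with n hn
      apply coe_inj
      rw [← coe_mul_mult, coe_sandwich, coe_sandwich, mul_assoc _ _ (E.trunc σ n), hn])
  -- the sequence `trunc σ n * e i j` is eventually `e (σ i) j` and tends to `V * e i j` strictly
  refine ⟨V, fun i j => ext_fst (ContinuousLinearMap.ext fun x => ?_)⟩
  refine tendsto_nhds_unique (hV ((E.e i j).fst x)) (tendsto_const_nhds.congr' ?_)
  filter_upwards [eventually_gt_atTop i] with n hn
  have := congrArg (fun m : 𝓜(ℂ, A) => m.fst x) (E.trunc_mul_e σ n i j)
  rw [if_pos hn] at this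
  exact this.symm

lemma pair_injective (k : ℕ) : Function.Injective fun i => Nat.pair i k := fun _ _ h =>
  (Nat.pair_eq_pair.1 h).1

/-- The isometry of `M(A)` that sends the `i`-th basis vector to the one of index `Nat.pair i k`.
As `Nat.pair` is a bijection, the ranges of these isometries are orthogonal and exhaust
everything. -/
def V (k : ℕ) : 𝓜(ℂ, A) := (E.exists_isometry (pair_injective k)).choose

lemma V_mul_e (k i j : ℕ) : E.V k * E.e i j = E.e (Nat.pair i k) j :=
  (E.exists_isometry (pair_injective k)).choose_spec i j

lemma e_mul_star_V (k i j : ℕ) : E.e i j * star (E.V k) = E.e i (Nat.pair j k) := by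
  rw [← E.star_e, ← star_mul, V_mul_e, E.star_e]

lemma star_V_mul_V (k l : ℕ) : star (E.V k) * E.V l = if k = l then 1 else 0 := by
  refine E.ext_e fun p i j q => ?_
  rw [mul_assoc, mul_assoc, mul_assoc, V_mul_e, ← mul_assoc, e_mul_star_V, E.e_mul]
  by_cases hkl : k = l
  · by_cases hij : i = j <;> simp [hkl, hij, Nat.pair_eq_pair, E.e_mul]
  · simp [hkl, Nat.pair_eq_pair]

/-- The system `w i j a = V i * a * star (V j)` of matrix units in `A` with coefficients in `A`. -/
def wsys : WSys A A where
  w i j := (sandwich (E.V i) (star (E.V j)) : A →L[ℂ] A)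
  w_mul i j k l a b := by
    apply coe_inj
    have h : ∀ x y : 𝓜(ℂ, A), E.V i * x * star (E.V j) * (E.V k * y * star (E.V l)) =
        E.V i * x * (star (E.V j) * E.V k) * y * star (E.V l) := by
      intros; simp only [mul_assoc]
    change (((sandwich _ _ a * sandwich _ _ b : A)) : 𝓜(ℂ, A)) = _
    rw [coe_mul, coe_sandwich, coe_sandwich, h, star_V_mul_V]
    split_ifs
    · rw [mul_one, mul_assoc (E.V i), ← coe_mul, ← coe_sandwich]
      rfl
    · rw [mul_zero, zero_mul, zero_mul]
      exact (map_zero (coeHom (𝕜 := ℂ) (A := A))).symm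
  star_w i j a := by
    apply coe_inj
    change (((star (sandwich _ _ a) : A)) : 𝓜(ℂ, A)) = ((sandwich _ _ _ : A) : 𝓜(ℂ, A))
    rw [← star_coe, coe_sandwich, coe_sandwich, star_mul, star_mul, star_star, star_coe, mul_assoc]
  w_inj i a h := by
    have h : sandwich (E.V i) (star (E.V i)) a = 0 := h
    have h0 : ((0 : A) : 𝓜(ℂ, A)) = 0 := map_zero (coeHom (𝕜 := ℂ) (A := A))
    apply coe_inj
    calc (a : 𝓜(ℂ, A)) = (star (E.V i) * E.V i) * a * (star (E.V i) * E.V i) := by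
          simp [star_V_mul_V]
      _ = star (E.V i) * (E.V i * a * star (E.V i)) * E.V i := by simp only [mul_assoc]
      _ = ((0 : A) : 𝓜(ℂ, A)) := by rw [← coe_sandwich, h, h0, mul_zero, zero_mul]

/-- With `i = pair i₁ i₂` and `j = pair j₁ j₂`, the element `e i p * c * e q j` is of the form
`V i₂ * a * star (V j₂)` for `a = e i₁ p * c * e q j₁`. -/
lemma dense_wsys : Dense (Submodule.span ℂ {x : A | ∃ i j a, x = E.wsys.w i j a} : Set A) := by
  refine E.dense_sandwich.mono (Submodule.span_mono ?_)
  rintro _ ⟨i, p, q, j, c, rfl⟩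
  refine ⟨i.unpair.2, j.unpair.2, sandwich (E.e i.unpair.1 p) (E.e q j.unpair.1) c, ?_⟩
  apply coe_inj
  change _ = ((sandwich _ _ _ : A) : 𝓜(ℂ, A))
  rw [coe_sandwich, coe_sandwich, coe_sandwich]
  conv_lhs => rw [← Nat.pair_unpair i, ← Nat.pair_unpair j, ← V_mul_e, ← e_mul_star_V]
  simp only [mul_assoc]

end MultUnits

/-- `A` is ⋆-isomorphic to the functions on a one-point space with values in `A`;
this moves `A` to a higher universe. -/
def punitEquiv (A : Type u) [NonUnitalCStarAlgebra A] : A ≃⋆ₐ[ℂ] (PUnit.{v + 1} → A) where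
  toFun a := fun _ => a
  invFun f := f PUnit.unit
  left_inv _ := rfl
  right_inv _ := rfl
  map_mul' _ _ := rfl
  map_add' _ _ := rfl
  map_star' _ := rfl
  map_smul' _ _ := rfl

end Backward

/-- A C⋆-algebra `A` is stable (i.e. `A ≅ A ⊗ 𝒦`) if and only if there
exists a nondegenerate homomorphism `ι : 𝒦 → M(A)`. -/
theorem isStable_iff_exists_nondegenerate
    {A : Type u} {K : Type v} [NonUnitalCStarAlgebra A] [NonUnitalCStarAlgebra K]
    (hK : IsCompactOperatorsAlgebra K) :
    IsStable A K ↔ ∃ ι : K →⋆ₙₐ[ℂ] 𝓜(ℂ, A), Nondegenerate ι := by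
  obtain ⟨U⟩ := hK
  constructor
  · rintro ⟨⟨T, τ, e⟩⟩
    exact ⟨(τ.congr e.symm).oneTensor, (τ.congr e.symm).nondegenerate_oneTensor⟩
  · rintro ⟨ι, hι⟩
    let E := MultUnits.ofHom U ι hι
    exact ⟨⟨PUnit.{v + 1} → A, (E.wsys.tensor U E.dense_wsys).congr (punitEquiv A), punitEquiv A⟩⟩
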